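/- arXiv:2104.03732 — 2 statements merged into one kernel-verified Lean document; each statement's English description precedes it below -/
import Mathlib

section
/- Sobolev product estimate on the torus, Fourier form (Lemma 2.1 of the paper): Let d ≥ 1 and s₁, s₂ ∈ ℝ satisfy s₁ < d/2, s₂ < d/2 and s₁ + s₂ > 0. Then there exists a constant C > 0, depending only on d, s₁, s₂, such that for all a, b : ℤ^d → ℂ with a(0) = b(0) = 0, ‖a‖_{H^{s₁}} < ∞ and ‖b‖_{H^{s₂}} < ∞, the convolution c(k) = Σ_{l ∈ ℤ^d} a(l)·b(k − l) converges absolutely for every k ∈ ℤ^d, and ‖c‖_{H^{s₁+s₂−d/2}} ≤ C · ‖a‖_{H^{s₁}} · ‖b‖_{H^{s₂}}. -/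
/-- The squared homogeneous Sobolev weight `|k|^{2s} = (Σᵢ kᵢ²)^s` for `k ∈ ℤ^d`. -/
noncomputable def sobolevWeight {d : ℕ} (s : ℝ) (k : Fin d → ℤ) : ℝ :=
  (∑ i, ((k i : ℝ)) ^ 2) ^ s

/-- The summand `|k|^{2s} |a(k)|²` indexed by nonzero `k ∈ ℤ^d`. -/
noncomputable def sobolevSummand {d : ℕ} (s : ℝ) (a : (Fin d → ℤ) → ℂ)
    (k : {k : Fin d → ℤ // k ≠ 0}) : ℝ :=
  sobolevWeight s k.1 * ‖a k.1‖ ^ 2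

/-- The homogeneous Sobolev norm `‖a‖_{H^s} = (Σ_{k≠0} |k|^{2s}|a(k)|²)^{1/2}`. -/
noncomputable def sobolevNorm {d : ℕ} (s : ℝ) (a : (Fin d → ℤ) → ℂ) : ℝ :=
  Real.sqrt (∑' k : {k : Fin d → ℤ // k ≠ 0}, sobolevSummand s a k)

open scoped ENNReal

section LatticeSums

variable {d : ℕ}

/-- The squared Euclidean length of a lattice point. -/
def latticeSq (k : Fin d → ℤ) : ℝ := ∑ i, (k i : ℝ) ^ 2

lemma latticeSq_nonneg (k : Fin d → ℤ) : 0 ≤ latticeSq k :=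
  Finset.sum_nonneg fun _ _ => sq_nonneg _

lemma sq_le_latticeSq (k : Fin d → ℤ) (i : Fin d) : (k i : ℝ) ^ 2 ≤ latticeSq k :=
  Finset.single_le_sum (f := fun i => (k i : ℝ) ^ 2) (fun _ _ => sq_nonneg _) (Finset.mem_univ i)

lemma one_le_latticeSq {k : Fin d → ℤ} (hk : k ≠ 0) : 1 ≤ latticeSq k := by
  obtain ⟨i, hi⟩ := Function.ne_iff.1 hk
  refine le_trans ?_ (sq_le_latticeSq k i)
  have hi' : k i ≠ 0 := hi
  have : 0 < k i ^ 2 := by positivity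
  exact_mod_cast this

lemma latticeSq_pos {k : Fin d → ℤ} (hk : k ≠ 0) : 0 < latticeSq k :=
  one_pos.trans_le (one_le_latticeSq hk)

lemma latticeSq_add_le (k l : Fin d → ℤ) :
    latticeSq (k + l) ≤ 2 * latticeSq k + 2 * latticeSq l := by
  unfold latticeSq
  rw [Finset.mul_sum, Finset.mul_sum, ← Finset.sum_add_distrib]
  refine Finset.sum_le_sum fun i _ => ?_
  simp only [Pi.add_apply, Int.cast_add]
  nlinarith [sq_nonneg ((k i : ℝ) - l i)]

lemma latticeSq_neg (k : Fin d → ℤ) : latticeSq (-k) = latticeSq k := by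
  simp [latticeSq]

lemma latticeSq_sub_le (k l : Fin d → ℤ) :
    latticeSq (k - l) ≤ 2 * latticeSq k + 2 * latticeSq l := by
  simpa [sub_eq_add_neg, latticeSq_neg] using latticeSq_add_le k (-l)

lemma latticeSq_le_sub (k l : Fin d → ℤ) :
    latticeSq k ≤ 2 * latticeSq l + 2 * latticeSq (k - l) := by
  simpa using latticeSq_add_le l (k - l)

/-- The number of lattice points in a ball of radius `√T ≥ 1` is at most `(3√T)^d`. -/
lemma card_le_of_latticeSq_le {T : ℝ} (hT : 1 ≤ T) (S : Finset (Fin d → ℤ))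
    (hS : ∀ l ∈ S, latticeSq l ≤ T) : (S.card : ℝ) ≤ 3 ^ d * T ^ ((d : ℝ) / 2) := by
  have hsub : S ⊆ Fintype.piFinset fun _ : Fin d => Finset.Icc (-⌊√T⌋) ⌊√T⌋ := by
    intro l hl
    rw [Fintype.mem_piFinset]
    intro i
    have h1 : |(l i : ℝ)| ≤ √T := Real.abs_le_sqrt ((sq_le_latticeSq l i).trans (hS l hl))
    have h2 : |l i| ≤ ⌊√T⌋ := Int.le_floor.2 (by exact_mod_cast h1)
    exact Finset.mem_Icc.2 (abs_le.1 h2)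
  have h1 : 1 ≤ √T := Real.one_le_sqrt.2 hT
  have h0 : 0 ≤ ⌊√T⌋ := Int.floor_nonneg.2 (by positivity)
  have hcard : ((Finset.Icc (-⌊√T⌋) ⌊√T⌋).card : ℝ) ≤ 3 * √T := by
    have e : ((Finset.Icc (-⌊√T⌋) ⌊√T⌋).card : ℤ) = 2 * ⌊√T⌋ + 1 := by
      rw [Int.card_Icc, Int.toNat_of_nonneg (by omega)]; ring
    have e' : ((Finset.Icc (-⌊√T⌋) ⌊√T⌋).card : ℝ) = 2 * ⌊√T⌋ + 1 := by exact_mod_cast e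
    rw [e']
    linarith [Int.floor_le (√T)]
  calc (S.card : ℝ) ≤ ((Finset.Icc (-⌊√T⌋) ⌊√T⌋).card : ℝ) ^ d := by
        have := Finset.card_le_card hsub
        rw [Fintype.card_piFinset_const] at this
        exact_mod_cast this
    _ ≤ (3 * √T) ^ d := by gcongr
    _ = 3 ^ d * T ^ ((d : ℝ) / 2) := by
        rw [mul_pow, Real.sqrt_eq_rpow, ← Real.rpow_mul_natCast (by linarith)]
        congr 2; ring

/-- Powers of comparable positive numbers are comparable. -/
lemma rpow_le_mul_rpow_of_comparable {x y M : ℝ} (hx : 0 < x) (hy : 0 < y) (hM : 1 ≤ M)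
    (hxy : x ≤ M * y) (hyx : y ≤ M * x) (s : ℝ) : x ^ s ≤ M ^ |s| * y ^ s := by
  have hM0 : 0 < M := by linarith
  rcases le_total 0 s with h | h
  · rw [abs_of_nonneg h, ← Real.mul_rpow hM0.le hy.le]
    exact Real.rpow_le_rpow hx.le hxy h
  · rw [abs_of_nonpos h, Real.rpow_neg hM0.le, ← Real.inv_rpow hM0.le,
      ← Real.mul_rpow (by positivity) hy.le]
    refine Real.rpow_le_rpow_of_nonpos (by positivity) ?_ h
    rw [inv_mul_le_iff₀ hM0]
    exact hyx

lemma exists_sum_rpow_latticeSq_le {p : ℝ} (hp : 0 < p + d / 2) :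
    ∃ C : ℝ, 0 ≤ C ∧ ∀ T : ℝ, 0 < T → ∀ S : Finset (Fin d → ℤ),
      (∀ l ∈ S, l ≠ 0 ∧ latticeSq l ≤ T) →
      ∑ l ∈ S, latticeSq l ^ p ≤ C * T ^ (p + d / 2) := by
  set e : ℝ := p + d / 2 with he
  set r : ℝ := (1 / 2 : ℝ) ^ e with hr
  have hr1 : r < 1 := Real.rpow_lt_one (by norm_num) (by norm_num) hp
  set K : ℝ := 2 ^ |p| * 3 ^ d with hK
  have hC : 0 ≤ K / (1 - r) := div_nonneg (by positivity) (by linarith)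
  refine ⟨K / (1 - r), hC, fun T hT => ?_⟩
  obtain ⟨n, hn⟩ : ∃ n : ℕ, T < 2 ^ n := pow_unbounded_of_one_lt T one_lt_two
  induction n generalizing T with
  | zero =>
    intro S hS
    have hempty : S = ∅ := by
      refine Finset.eq_empty_of_forall_notMem fun l hl => ?_
      have := one_le_latticeSq (hS l hl).1
      have := (hS l hl).2
      simp at hn
      linarith
    rw [hempty, Finset.sum_empty]
    positivity
  | succ n ih =>
    intro S hS
    rcases S.eq_empty_or_nonempty with rfl | ⟨l₀, hl₀⟩
    · rw [Finset.sum_empty]; positivity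
    have hT1 : 1 ≤ T := (one_le_latticeSq (hS l₀ hl₀).1).trans (hS l₀ hl₀).2
    rw [← Finset.sum_filter_add_sum_filter_not S (fun l => latticeSq l ≤ T / 2)]
    have hlow := ih (T / 2) (by positivity) (by rw [pow_succ] at hn; linarith)
      (S.filter fun l => latticeSq l ≤ T / 2) (by
        intro l hl
        rw [Finset.mem_filter] at hl
        exact ⟨(hS l hl.1).1, hl.2⟩)
    have hhigh : ∑ l ∈ S with ¬ latticeSq l ≤ T / 2, latticeSq l ^ p ≤ K * T ^ e := by
      have hterm : ∀ l ∈ S.filter (fun l => ¬ latticeSq l ≤ T / 2),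
          latticeSq l ^ p ≤ 2 ^ |p| * T ^ p := by
        intro l hl
        rw [Finset.mem_filter, not_le] at hl
        have := (hS l hl.1).2
        exact rpow_le_mul_rpow_of_comparable (latticeSq_pos (hS l hl.1).1) hT one_le_two
          (by linarith) (by linarith) p
      refine (Finset.sum_le_card_nsmul _ _ _ hterm).trans ?_
      rw [nsmul_eq_mul]
      have hcard := card_le_of_latticeSq_le hT1 (S.filter fun l => ¬ latticeSq l ≤ T / 2)
        fun l hl => (hS l (Finset.mem_filter.1 hl).1).2
      calc _ ≤ 3 ^ d * T ^ ((d : ℝ) / 2) * (2 ^ |p| * T ^ p) := by gcongr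
        _ = K * T ^ e := by rw [he, Real.rpow_add hT]; ring
    have hhalf : (T / 2) ^ e = r * T ^ e := by
      rw [hr, ← Real.mul_rpow (by norm_num) hT.le]; congr 1; ring
    rw [hhalf] at hlow
    have hne : 1 - r ≠ 0 := by linarith
    calc _ ≤ K / (1 - r) * (r * T ^ e) + K * T ^ e := add_le_add hlow hhigh
      _ = K / (1 - r) * T ^ e := by field_simp; ring

/-- The weight `|k|^{2s}` as an extended nonnegative real, set to zero at the origin. -/
noncomputable def latticeWeight (s : ℝ) (k : Fin d → ℤ) : ℝ≥0∞ :=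
  if k = 0 then 0 else ENNReal.ofReal (latticeSq k ^ s)

/-- The squared homogeneous Sobolev norm of an extended nonnegative sequence. -/
noncomputable def latticeEnergy (s : ℝ) (f : (Fin d → ℤ) → ℝ≥0∞) : ℝ≥0∞ :=
  ∑' k, latticeWeight s k * f k ^ 2

@[simp] lemma latticeWeight_zero_right (s : ℝ) : latticeWeight s (0 : Fin d → ℤ) = 0 := by
  simp [latticeWeight]

lemma latticeWeight_of_ne (s : ℝ) {k : Fin d → ℤ} (hk : k ≠ 0) :
    latticeWeight s k = ENNReal.ofReal (latticeSq k ^ s) := by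
  simp [latticeWeight, hk]

lemma latticeWeight_ne_zero (s : ℝ) {k : Fin d → ℤ} (hk : k ≠ 0) : latticeWeight s k ≠ 0 := by
  rw [latticeWeight_of_ne s hk]
  have := latticeSq_pos hk
  simp only [ne_eq, ENNReal.ofReal_eq_zero, not_le]
  positivity

lemma latticeWeight_mul (s t : ℝ) (k : Fin d → ℤ) :
    latticeWeight s k * latticeWeight t k = latticeWeight (s + t) k := by
  by_cases hk : k = 0
  · simp [hk]
  · have := latticeSq_pos hk
    rw [latticeWeight_of_ne s hk, latticeWeight_of_ne t hk, latticeWeight_of_ne _ hk,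
      ← ENNReal.ofReal_mul (by positivity), Real.rpow_add this]

lemma latticeWeight_exponent_zero {k : Fin d → ℤ} (hk : k ≠ 0) : latticeWeight 0 k = 1 := by
  simp [latticeWeight_of_ne 0 hk]

lemma latticeWeight_exponent_zero_le (k : Fin d → ℤ) : latticeWeight 0 k ≤ 1 := by
  by_cases hk : k = 0
  · simp [hk]
  · exact (latticeWeight_exponent_zero hk).le

lemma one_le_latticeWeight {s : ℝ} (hs : 0 ≤ s) {k : Fin d → ℤ} (hk : k ≠ 0) :
    1 ≤ latticeWeight s k := by
  rw [latticeWeight_of_ne s hk, ENNReal.one_le_ofReal]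
  exact Real.one_le_rpow (one_le_latticeSq hk) hs

lemma latticeWeight_neg (s : ℝ) (k : Fin d → ℤ) : latticeWeight s (-k) = latticeWeight s k := by
  simp [latticeWeight, latticeSq_neg]

lemma latticeWeight_le_of_comparable {M : ℝ} (hM : 1 ≤ M) {k l : Fin d → ℤ} (hk : k ≠ 0)
    (hl : l ≠ 0) (hkl : latticeSq k ≤ M * latticeSq l) (hlk : latticeSq l ≤ M * latticeSq k)
    (s : ℝ) : latticeWeight s k ≤ ENNReal.ofReal (M ^ |s|) * latticeWeight s l := by
  rw [latticeWeight_of_ne s hk, latticeWeight_of_ne s hl, ← ENNReal.ofReal_mul (by positivity)]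
  exact ENNReal.ofReal_le_ofReal
    (rpow_le_mul_rpow_of_comparable (latticeSq_pos hk) (latticeSq_pos hl) hM hkl hlk s)

lemma exists_tsum_latticeWeight_le {p : ℝ} (hp : 0 < p + d / 2) {M : ℝ} (hM : 0 < M) :
    ∃ C : ℝ≥0∞, C ≠ ∞ ∧ ∀ k : Fin d → ℤ,
      (∑' l : Fin d → ℤ, if latticeSq l ≤ M * latticeSq k then latticeWeight p l else 0) ≤
        C * latticeWeight (p + d / 2) k := by
  obtain ⟨C, hC, h⟩ := exists_sum_rpow_latticeSq_le (d := d) hp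
  refine ⟨ENNReal.ofReal (C * M ^ (p + d / 2)), ENNReal.ofReal_ne_top, fun k => ?_⟩
  by_cases hk : k = 0
  · subst hk
    have h0 : latticeSq (0 : Fin d → ℤ) = 0 := by simp [latticeSq]
    simp only [h0, mul_zero, latticeWeight_zero_right, nonpos_iff_eq_zero, ENNReal.tsum_eq_zero]
    intro l
    by_cases hl : l = 0
    · simp [hl]
    · rw [if_neg (not_le.2 (latticeSq_pos hl))]
  have hQ := latticeSq_pos hk
  rw [latticeWeight_of_ne _ hk, ← ENNReal.ofReal_mul (by positivity)]
  refine ENNReal.summable.tsum_le_of_sum_le fun S => ?_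
  rw [← Finset.sum_filter]
  have hS := h (M * latticeSq k) (by positivity)
    ((S.filter fun l => latticeSq l ≤ M * latticeSq k).filter fun l => l ≠ 0) (by
      intro l hl
      simp only [Finset.mem_filter] at hl
      exact ⟨hl.2, hl.1.2⟩)
  rw [Real.mul_rpow hM.le hQ.le, ← mul_assoc] at hS
  refine le_trans (le_of_eq ?_) (ENNReal.ofReal_le_ofReal hS)
  rw [ENNReal.ofReal_sum_of_nonneg fun l _ => Real.rpow_nonneg (latticeSq_nonneg l) p,
    Finset.sum_filter (fun l => l ≠ 0)]
  refine Finset.sum_congr rfl fun l _ => ?_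
  simp [latticeWeight]

/-- The Cauchy–Schwarz inequality for sums in `ℝ≥0∞`. -/
lemma ENNReal.sq_tsum_le_of_sq_le_mul {ι : Type*} {h u v : ι → ℝ≥0∞}
    (H : ∀ i, h i ^ 2 ≤ u i * v i) : (∑' i, h i) ^ 2 ≤ (∑' i, u i) * ∑' i, v i := by
  have hroot : ∀ x : ℝ≥0∞, (x ^ (1 / 2 : ℝ)) ^ (2 : ℝ) = x := fun x => by
    rw [← ENNReal.rpow_mul]; norm_num
  have key : ∑' i, h i ≤ (∑' i, u i) ^ (1 / 2 : ℝ) * (∑' i, v i) ^ (1 / 2 : ℝ) := by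
    refine ENNReal.summable.tsum_le_of_sum_le fun S => ?_
    calc ∑ i ∈ S, h i ≤ ∑ i ∈ S, u i ^ (1 / 2 : ℝ) * v i ^ (1 / 2 : ℝ) := by
          refine Finset.sum_le_sum fun i _ => ?_
          rw [← ENNReal.mul_rpow_of_nonneg _ _ (by norm_num), one_div,
            ENNReal.le_rpow_inv_iff (by norm_num), ENNReal.rpow_two]
          exact H i
      _ ≤ (∑ i ∈ S, (u i ^ (1 / 2 : ℝ)) ^ (2 : ℝ)) ^ (1 / 2 : ℝ) *
            (∑ i ∈ S, (v i ^ (1 / 2 : ℝ)) ^ (2 : ℝ)) ^ (1 / 2 : ℝ) :=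
          ENNReal.inner_le_Lp_mul_Lq S _ _ Real.HolderConjugate.two_two
      _ ≤ _ := by
          simp only [hroot]
          gcongr <;> exact ENNReal.sum_le_tsum S
  calc (∑' i, h i) ^ 2 ≤ ((∑' i, u i) ^ (1 / 2 : ℝ) * (∑' i, v i) ^ (1 / 2 : ℝ)) ^ 2 := by gcongr
    _ = _ := by rw [mul_pow, ← ENNReal.rpow_two, ← ENNReal.rpow_two, hroot, hroot]

lemma ENNReal.add_add_sq_le (x y z : ℝ≥0∞) :
    (x + y + z) ^ 2 ≤ 9 * (x ^ 2 + y ^ 2 + z ^ 2) := by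
  have h : x + y + z ≤ 3 * max x (max y z) := by
    calc x + y + z ≤ max x (max y z) + max x (max y z) + max x (max y z) := by
          gcongr <;> simp
      _ = 3 * max x (max y z) := by ring
  have hmax : max x (max y z) ^ 2 ≤ x ^ 2 + y ^ 2 + z ^ 2 := by
    rcases max_choice x (max y z) with h | h <;> rw [h]
    · rw [add_assoc]; exact le_self_add
    · rcases max_choice y z with h | h <;> rw [h]
      · rw [add_right_comm]; exact le_add_self
      · exact le_add_self
  calc (x + y + z) ^ 2 ≤ (3 * max x (max y z)) ^ 2 := by gcongr
    _ = 9 * max x (max y z) ^ 2 := by rw [mul_pow]; norm_num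
    _ ≤ _ := by gcongr

/-- Contribution of the frequencies `|l| ≤ |k| / 2` to the product. -/
lemma exists_lowHigh_le {s₁ : ℝ} (hs₁ : s₁ < d / 2) (s₂ : ℝ) :
    ∃ C : ℝ≥0∞, C ≠ ∞ ∧ ∀ f g : (Fin d → ℤ) → ℝ≥0∞, f 0 = 0 →
      ∑' k, latticeWeight (s₁ + s₂ - d / 2) k *
        (∑' l, if 4 * latticeSq l ≤ latticeSq k then f l * g (k - l) else 0) ^ 2 ≤
      C * (latticeEnergy s₁ f * latticeEnergy s₂ g) := by
  obtain ⟨C, hC, h⟩ := exists_tsum_latticeWeight_le (d := d) (p := -s₁) (by linarith)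
    (M := 1 / 4) (by norm_num)
  set K : ℝ≥0∞ := ENNReal.ofReal (4 ^ |s₂|)
  refine ⟨C * K, ENNReal.mul_ne_top hC ENNReal.ofReal_ne_top, fun f g hf => ?_⟩
  have hk : ∀ k : Fin d → ℤ, latticeWeight (s₁ + s₂ - d / 2) k *
      (∑' l, if 4 * latticeSq l ≤ latticeSq k then f l * g (k - l) else 0) ^ 2 ≤
      ∑' l, C * K * ((latticeWeight s₁ l * f l ^ 2) *
        (latticeWeight s₂ (k - l) * g (k - l) ^ 2)) := by
    intro k
    have hcs := ENNReal.sq_tsum_le_of_sq_le_mul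
      (h := fun l => if 4 * latticeSq l ≤ latticeSq k then f l * g (k - l) else 0)
      (u := fun l => if latticeSq l ≤ 1 / 4 * latticeSq k then latticeWeight (-s₁) l else 0)
      (v := fun l => if 4 * latticeSq l ≤ latticeSq k then
        latticeWeight s₁ l * f l ^ 2 * g (k - l) ^ 2 else 0) (by
        intro l
        by_cases hl : l = 0
        · simp [hl, hf]
        by_cases hc : 4 * latticeSq l ≤ latticeSq k
        · have hc' : latticeSq l ≤ 1 / 4 * latticeSq k := by linarith
          simp only [hc, hc', if_true]
          rw [← mul_assoc, ← mul_assoc, latticeWeight_mul, neg_add_cancel,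
            latticeWeight_exponent_zero hl, one_mul, mul_pow]
        · simp [hc])
    calc _ ≤ latticeWeight (s₁ + s₂ - d / 2) k * (C * latticeWeight (-s₁ + d / 2) k *
          ∑' l, if 4 * latticeSq l ≤ latticeSq k then
            latticeWeight s₁ l * f l ^ 2 * g (k - l) ^ 2 else 0) := by
          gcongr
          refine hcs.trans ?_
          gcongr
          exact h k
      _ = ∑' l, C * (latticeWeight s₂ k * if 4 * latticeSq l ≤ latticeSq k then
            latticeWeight s₁ l * f l ^ 2 * g (k - l) ^ 2 else 0) := by
          have e : latticeWeight s₂ k =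
              latticeWeight (s₁ + s₂ - d / 2) k * latticeWeight (-s₁ + d / 2) k := by
            rw [latticeWeight_mul]; congr 1; ring
          rw [ENNReal.tsum_mul_left, ENNReal.tsum_mul_left, e]
          ring
      _ ≤ _ := by
          refine ENNReal.tsum_le_tsum fun l => ?_
          by_cases hk : k = 0
          · simp [hk]
          by_cases hc : 4 * latticeSq l ≤ latticeSq k
          · have h1 := latticeSq_le_sub k l
            have h2 := latticeSq_sub_le k l
            have h3 := latticeSq_pos hk
            have hkl : k - l ≠ 0 := by
              intro h0
              rw [h0] at h1
              have : latticeSq (0 : Fin d → ℤ) = 0 := by simp [latticeSq]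
              linarith
            have hw := latticeWeight_le_of_comparable (M := 4) (by norm_num) hk hkl
              (by linarith) (by linarith) s₂
            simp only [hc, if_true]
            calc _ ≤ C * (K * latticeWeight s₂ (k - l) *
                  (latticeWeight s₁ l * f l ^ 2 * g (k - l) ^ 2)) := by gcongr
              _ = _ := by ring
          · simp [hc]
  refine (ENNReal.tsum_le_tsum hk).trans (le_of_eq ?_)
  rw [ENNReal.tsum_comm]
  simp only [ENNReal.tsum_mul_left]
  congr 1
  have hshift : ∀ l : Fin d → ℤ,
      ∑' k, latticeWeight s₂ (k - l) * g (k - l) ^ 2 = latticeEnergy s₂ g := fun l =>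
    (Equiv.subRight l).tsum_eq fun m => latticeWeight s₂ m * g m ^ 2
  simp only [hshift, ENNReal.tsum_mul_right]
  rfl

lemma tsum_comp_sub_eq_latticeEnergy (s : ℝ) (g : (Fin d → ℤ) → ℝ≥0∞) (k : Fin d → ℤ) :
    ∑' l, latticeWeight s (k - l) * g (k - l) ^ 2 = latticeEnergy s g :=
  (Equiv.subLeft k).tsum_eq fun m => latticeWeight s m * g m ^ 2

/-- Contribution of the frequencies with both `|l|` and `|k - l|` above `|k| / 2`. -/
lemma exists_highHigh_le {s₁ s₂ : ℝ} (hs : 0 < s₁ + s₂) :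
    ∃ C : ℝ≥0∞, C ≠ ∞ ∧ ∀ f g : (Fin d → ℤ) → ℝ≥0∞, f 0 = 0 → g 0 = 0 →
      ∑' k, latticeWeight (s₁ + s₂ - d / 2) k *
        (∑' l, if latticeSq k < 4 * latticeSq l ∧ latticeSq k < 4 * latticeSq (k - l) then
          f l * g (k - l) else 0) ^ 2 ≤
      C * (latticeEnergy s₁ f * latticeEnergy s₂ g) := by
  obtain ⟨C, hC, h⟩ := exists_tsum_latticeWeight_le (d := d) (p := s₁ + s₂ - d / 2)
    (by linarith) (M := 4) (by norm_num)
  set K : ℝ≥0∞ := ENNReal.ofReal (10 ^ |s₂|)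
  refine ⟨C * K, ENNReal.mul_ne_top hC ENNReal.ofReal_ne_top, fun f g hf hg => ?_⟩
  have hk : ∀ k : Fin d → ℤ, latticeWeight (s₁ + s₂ - d / 2) k *
      (∑' l, if latticeSq k < 4 * latticeSq l ∧ latticeSq k < 4 * latticeSq (k - l) then
        f l * g (k - l) else 0) ^ 2 ≤
      (∑' l, (K * (latticeWeight s₁ l * f l ^ 2) * latticeWeight (-(s₁ + s₂)) l) *
        if latticeSq k ≤ 4 * latticeSq l then latticeWeight (s₁ + s₂ - d / 2) k else 0) *
        latticeEnergy s₂ g := by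
    intro k
    have hcs := ENNReal.sq_tsum_le_of_sq_le_mul
      (h := fun l => if latticeSq k < 4 * latticeSq l ∧ latticeSq k < 4 * latticeSq (k - l) then
        f l * g (k - l) else 0)
      (u := fun l => if latticeSq k ≤ 4 * latticeSq l then
        K * (latticeWeight s₁ l * f l ^ 2) * latticeWeight (-(s₁ + s₂)) l else 0)
      (v := fun l => latticeWeight s₂ (k - l) * g (k - l) ^ 2) (by
        intro l
        by_cases hl : l = 0
        · simp [hl, hf]
        by_cases hkl : k - l = 0
        · simp [hkl, hg]
        by_cases hc : latticeSq k < 4 * latticeSq l ∧ latticeSq k < 4 * latticeSq (k - l)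
        · simp only [hc, hc.1.le, and_self, if_true]
          have h1 := latticeSq_sub_le k l
          have h2 := latticeSq_sub_le k (k - l)
          rw [sub_sub_cancel] at h2
          have hw := latticeWeight_le_of_comparable (M := 10) (by norm_num) hl hkl
            (by linarith) (by linarith) s₂
          have hone : latticeWeight s₁ l * latticeWeight (-(s₁ + s₂)) l * latticeWeight s₂ l
              = 1 := by
            rw [latticeWeight_mul, latticeWeight_mul, ← latticeWeight_exponent_zero hl]
            congr 1; ring
          calc (f l * g (k - l)) ^ 2
              = latticeWeight s₁ l * latticeWeight (-(s₁ + s₂)) l * latticeWeight s₂ l *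
                  (f l * g (k - l)) ^ 2 := by rw [hone, one_mul]
            _ ≤ latticeWeight s₁ l * latticeWeight (-(s₁ + s₂)) l *
                  (K * latticeWeight s₂ (k - l)) * (f l * g (k - l)) ^ 2 := by gcongr
            _ = _ := by ring
        · simp [hc])
    rw [tsum_comp_sub_eq_latticeEnergy] at hcs
    refine (mul_le_mul_right hcs _).trans (le_of_eq ?_)
    rw [← mul_assoc, ← ENNReal.tsum_mul_left]
    congr 2
    funext l
    split_ifs <;> ring
  refine (ENNReal.tsum_le_tsum hk).trans ?_
  rw [ENNReal.tsum_mul_right, ENNReal.tsum_comm, ← mul_assoc]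
  gcongr
  rw [latticeEnergy, ← ENNReal.tsum_mul_left]
  refine ENNReal.tsum_le_tsum fun l => ?_
  rw [ENNReal.tsum_mul_left]
  calc _ ≤ K * (latticeWeight s₁ l * f l ^ 2) * latticeWeight (-(s₁ + s₂)) l *
        (C * latticeWeight (s₁ + s₂ - d / 2 + d / 2) l) := by gcongr; exact h l
    _ = C * K * (latticeWeight s₁ l * f l ^ 2) *
        (latticeWeight (-(s₁ + s₂)) l * latticeWeight (s₁ + s₂ - d / 2 + d / 2) l) := by ring
    _ ≤ C * K * (latticeWeight s₁ l * f l ^ 2) * 1 := by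
        gcongr
        rw [latticeWeight_mul, sub_add_cancel, neg_add_cancel]
        exact latticeWeight_exponent_zero_le l
    _ = _ := mul_one _

/-- The Sobolev product estimate for extended nonnegative sequences. -/
lemma exists_latticeEnergy_convolution_le {s₁ s₂ : ℝ} (hs₁ : s₁ < d / 2) (hs₂ : s₂ < d / 2)
    (hs : 0 < s₁ + s₂) :
    ∃ C : ℝ≥0∞, C ≠ ∞ ∧ ∀ f g : (Fin d → ℤ) → ℝ≥0∞, f 0 = 0 → g 0 = 0 →
      latticeEnergy (s₁ + s₂ - d / 2) (fun k => ∑' l, f l * g (k - l)) ≤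
      C * (latticeEnergy s₁ f * latticeEnergy s₂ g) := by
  obtain ⟨C₁, hC₁, h₁⟩ := exists_lowHigh_le hs₁ s₂
  obtain ⟨C₂, hC₂, h₂⟩ := exists_lowHigh_le hs₂ s₁
  obtain ⟨C₃, hC₃, h₃⟩ := exists_highHigh_le (d := d) hs
  refine ⟨9 * (C₁ + C₂ + C₃), by finiteness, fun f g hf hg => ?_⟩
  have hsplit : ∀ k : Fin d → ℤ, ∑' l, f l * g (k - l) ≤
      (∑' l, if 4 * latticeSq l ≤ latticeSq k then f l * g (k - l) else 0) +
      (∑' l, if 4 * latticeSq l ≤ latticeSq k then g l * f (k - l) else 0) +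
      (∑' l, if latticeSq k < 4 * latticeSq l ∧ latticeSq k < 4 * latticeSq (k - l) then
        f l * g (k - l) else 0) := by
    intro k
    rw [← (Equiv.subLeft k).tsum_eq
      fun l => if 4 * latticeSq l ≤ latticeSq k then g l * f (k - l) else 0]
    simp only [Equiv.subLeft_apply, sub_sub_cancel]
    rw [← ENNReal.tsum_add, ← ENNReal.tsum_add]
    refine ENNReal.tsum_le_tsum fun l => ?_
    by_cases h1 : 4 * latticeSq l ≤ latticeSq k
    · rw [if_pos h1, add_assoc]
      exact le_self_add
    by_cases h2 : 4 * latticeSq (k - l) ≤ latticeSq k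
    · rw [if_pos h2, mul_comm (g _), add_right_comm]
      exact le_add_self
    · rw [if_neg h1, if_neg h2, if_pos ⟨not_le.1 h1, not_le.1 h2⟩]
      exact le_add_self
  have h₂' := h₂ g f hg
  rw [add_comm s₂ s₁, mul_comm (latticeEnergy s₂ g)] at h₂'
  calc latticeEnergy (s₁ + s₂ - d / 2) (fun k => ∑' l, f l * g (k - l))
      ≤ ∑' k, latticeWeight (s₁ + s₂ - d / 2) k * (9 * (_ ^ 2 + _ ^ 2 + _ ^ 2)) :=
        ENNReal.tsum_le_tsum fun k => by
          gcongr
          exact (pow_le_pow_left' (hsplit k) 2).trans (ENNReal.add_add_sq_le _ _ _)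
    _ ≤ 9 * (C₁ * (latticeEnergy s₁ f * latticeEnergy s₂ g) +
          C₂ * (latticeEnergy s₁ f * latticeEnergy s₂ g) +
          C₃ * (latticeEnergy s₁ f * latticeEnergy s₂ g)) := by
        simp only [mul_left_comm _ (9 : ℝ≥0∞), ENNReal.tsum_mul_left, mul_add, ENNReal.tsum_add]
        rw [← mul_add, ← mul_add, ← mul_add, ← mul_add]
        gcongr
        exacts [h₁ f g hf, h₃ f g hf hg]
    _ = _ := by ring

/-- The convolution at the origin is controlled by duality. -/
lemma sq_tsum_mul_neg_le {s₁ s₂ : ℝ} (hs : 0 ≤ s₁ + s₂) {f : (Fin d → ℤ) → ℝ≥0∞}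
    (g : (Fin d → ℤ) → ℝ≥0∞) (hf : f 0 = 0) :
    (∑' l, f l * g (0 - l)) ^ 2 ≤ latticeEnergy s₁ f * latticeEnergy s₂ g := by
  rw [← tsum_comp_sub_eq_latticeEnergy s₂ g 0]
  refine ENNReal.sq_tsum_le_of_sq_le_mul fun l => ?_
  by_cases hl : l = 0
  · simp [hl, hf]
  · rw [mul_mul_mul_comm, zero_sub, latticeWeight_neg, latticeWeight_mul, mul_pow]
    exact le_mul_of_one_le_left' (one_le_latticeWeight hs hl)

lemma sobolevSummand_nonneg (s : ℝ) (a : (Fin d → ℤ) → ℂ) (k : {k : Fin d → ℤ // k ≠ 0}) :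
    0 ≤ sobolevSummand s a k :=
  mul_nonneg (Real.rpow_nonneg (latticeSq_nonneg k.1) s) (sq_nonneg _)

lemma tsum_enorm_sobolevSummand (s : ℝ) (a : (Fin d → ℤ) → ℂ) :
    ∑' k, ‖sobolevSummand s a k‖ₑ = latticeEnergy s fun k => ‖a k‖ₑ := by
  rw [latticeEnergy, ← tsum_subtype_eq_of_support_subset (s := {k : Fin d → ℤ | k ≠ 0})]
  · refine tsum_congr fun k => ?_
    have hw : 0 ≤ sobolevWeight s k.1 := Real.rpow_nonneg (latticeSq_nonneg k.1) s
    rw [latticeWeight_of_ne s k.2, Real.enorm_of_nonneg (sobolevSummand_nonneg s a k),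
      sobolevSummand, ENNReal.ofReal_mul hw, ENNReal.ofReal_pow (norm_nonneg _), ofReal_norm]
    rfl
  · intro k hk h0
    simp [h0] at hk

lemma summable_sobolevSummand_iff (s : ℝ) (a : (Fin d → ℤ) → ℂ) :
    Summable (sobolevSummand s a) ↔ latticeEnergy s (fun k => ‖a k‖ₑ) ≠ ∞ := by
  rw [← tsum_enorm_sobolevSummand, tsum_enorm_ne_top_iff_summable_norm, summable_norm_iff]

lemma sobolevNorm_eq_sqrt_toReal (s : ℝ) (a : (Fin d → ℤ) → ℂ) :
    sobolevNorm s a = √(latticeEnergy s fun k => ‖a k‖ₑ).toReal := by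
  rw [sobolevNorm, ← tsum_enorm_sobolevSummand, ENNReal.tsum_toReal_eq fun _ => enorm_ne_top]
  simp only [toReal_enorm, Real.norm_of_nonneg (sobolevSummand_nonneg s a _)]

lemma latticeEnergy_mono (s : ℝ) {f g : (Fin d → ℤ) → ℝ≥0∞} (h : ∀ k, f k ≤ g k) :
    latticeEnergy s f ≤ latticeEnergy s g :=
  ENNReal.tsum_le_tsum fun k => by gcongr; exact h k

lemma ne_top_of_latticeEnergy_ne_top {s : ℝ} {f : (Fin d → ℤ) → ℝ≥0∞}
    (h : latticeEnergy s f ≠ ∞) {k : Fin d → ℤ} (hk : k ≠ 0) : f k ≠ ∞ := by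
  intro hf
  refine ENNReal.ne_top_of_tsum_ne_top h k ?_
  simp [hf, ENNReal.mul_top (latticeWeight_ne_zero s hk)]

end LatticeSums

/-- **Sobolev product estimate on the torus, Fourier form.**
If `s₁, s₂ < d/2` and `s₁ + s₂ > 0`, then there is a constant `C > 0`, depending only
on `d, s₁, s₂`, such that for all zero-mean Fourier coefficient sequences
`a ∈ H^{s₁}`, `b ∈ H^{s₂}`, the convolution `c(k) = Σ_l a(l) b(k-l)` converges
absolutely for every `k` and `‖c‖_{H^{s₁+s₂-d/2}} ≤ C ‖a‖_{H^{s₁}} ‖b‖_{H^{s₂}}`. -/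
theorem sobolev_product_estimate (d : ℕ) (hd : 1 ≤ d) (s₁ s₂ : ℝ)
    (hs₁ : s₁ < d / 2) (hs₂ : s₂ < d / 2) (hs : 0 < s₁ + s₂) :
    ∃ C > (0 : ℝ), ∀ a b : (Fin d → ℤ) → ℂ,
      a 0 = 0 → b 0 = 0 →
      Summable (sobolevSummand s₁ a) →
      Summable (sobolevSummand s₂ b) →
      (∀ k : Fin d → ℤ, Summable (fun l : Fin d → ℤ => a l * b (k - l))) ∧
      Summable (sobolevSummand (s₁ + s₂ - d / 2)
        (fun k => ∑' l : Fin d → ℤ, a l * b (k - l))) ∧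
      sobolevNorm (s₁ + s₂ - d / 2) (fun k => ∑' l : Fin d → ℤ, a l * b (k - l)) ≤
        C * sobolevNorm s₁ a * sobolevNorm s₂ b := by
  obtain ⟨C, hC, h⟩ := exists_latticeEnergy_convolution_le hs₁ hs₂ hs
  refine ⟨√C.toReal + 1, by positivity, fun a b ha hb hsa hsb => ?_⟩
  rw [summable_sobolevSummand_iff] at hsa hsb
  have hE := h (fun k => ‖a k‖ₑ) (fun k => ‖b k‖ₑ) (by simp [ha]) (by simp [hb])
  have hbound := ENNReal.mul_ne_top hC (ENNReal.mul_ne_top hsa hsb)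
  have hconv : latticeEnergy (s₁ + s₂ - d / 2) (fun k => ‖∑' l, a l * b (k - l)‖ₑ) ≤
      C * (latticeEnergy s₁ (fun k => ‖a k‖ₑ) * latticeEnergy s₂ (fun k => ‖b k‖ₑ)) := by
    refine (latticeEnergy_mono _ fun k => ?_).trans hE
    simpa only [enorm_mul] using enorm_tsum_le_tsum_enorm (f := fun l => a l * b (k - l))
  refine ⟨fun k => ?_, ?_, ?_⟩
  · rw [← summable_norm_iff, ← tsum_enorm_ne_top_iff_summable_norm]
    simp only [enorm_mul]
    by_cases hk : k = 0
    · subst hk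
      have h0 := sq_tsum_mul_neg_le hs.le (f := fun k => ‖a k‖ₑ) (fun k => ‖b k‖ₑ) (by simp [ha])
      intro htop
      rw [htop] at h0
      exact ENNReal.mul_ne_top hsa hsb (top_le_iff.1 (by simpa using h0))
    · exact ne_top_of_latticeEnergy_ne_top (ne_top_of_le_ne_top hbound hE) hk
  · rw [summable_sobolevSummand_iff]
    exact ne_top_of_le_ne_top hbound hconv
  · simp only [sobolevNorm_eq_sqrt_toReal]
    refine (Real.sqrt_le_sqrt (ENNReal.toReal_mono hbound hconv)).trans ?_
    rw [ENNReal.toReal_mul, ENNReal.toReal_mul, Real.sqrt_mul ENNReal.toReal_nonneg,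
      Real.sqrt_mul ENNReal.toReal_nonneg, ← mul_assoc]
    gcongr
    exact le_add_of_nonneg_right zero_le_one
end

section
/- Quantitative decay bound from the proof of Theorem 1.2: Let κ > 0, λ > 0, c > 0, M > 0, and let y : [0,1] → ℝ be continuous, nonnegative, differentiable on (0,1), with y(0) ≤ M and y′(t) ≤ −κ·y(t)² / (M·(e^{−2λt} + c²)) for all t ∈ (0,1). Then for every t ∈ [0,1] one has y(t) ≤ M / (1 + (κ/(2λc²))·log((c²·e^{2λt} + 1)/(c² + 1))). -/
open Set

/-- Comparison principle for the Riccati inequality `M y' ≤ -G' y²` with `G` nondecreasing. -/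
theorem mul_one_add_sub_le_of_riccati {M a b : ℝ} (hM : 0 < M) {y y' G G' : ℝ → ℝ}
    (hab : a ≤ b) (hy_cont : ContinuousOn y (Icc a b)) (hG_cont : ContinuousOn G (Icc a b))
    (hy : ∀ t ∈ Ioo a b, HasDerivAt y (y' t) t) (hG : ∀ t ∈ Ioo a b, HasDerivAt G (G' t) t)
    (hG_nonneg : ∀ t ∈ Ioo a b, 0 ≤ G' t) (hyb : 0 ≤ y b) (hya : y a ≤ M)
    (h : ∀ t ∈ Ioo a b, M * y' t ≤ -(G' t * y t ^ 2)) :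
    y b * (1 + (G b - G a)) ≤ M := by
  rcases hyb.eq_or_lt with h0 | hpos
  · rw [← h0, zero_mul]; exact hM.le
  have hanti : AntitoneOn y (Icc a b) := by
    refine antitoneOn_of_hasDerivWithinAt_nonpos (f' := y') (convex_Icc a b) hy_cont
      (fun t ht => ?_) (fun t ht => ?_)
    · rw [interior_Icc] at ht
      exact (hy t ht).hasDerivWithinAt
    · rw [interior_Icc] at ht
      have := mul_nonneg (hG_nonneg t ht) (sq_nonneg (y t))
      exact nonpos_of_mul_nonpos_right (by linarith [h t ht]) hM
  have hy_pos : ∀ t ∈ Icc a b, 0 < y t := fun t ht =>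
    hpos.trans_le (hanti ht (right_mem_Icc.2 hab) ht.2)
  have hmono : MonotoneOn (fun t => M * (y t)⁻¹ - G t) (Icc a b) := by
    refine monotoneOn_of_hasDerivWithinAt_nonneg (f' := fun t => M * (-y' t / y t ^ 2) - G' t)
      (convex_Icc a b)
      ((continuousOn_const.mul (hy_cont.inv₀ fun t ht => (hy_pos t ht).ne')).sub hG_cont)
      (fun t ht => ?_) (fun t ht => ?_)
    · rw [interior_Icc] at ht
      exact ((((hy t ht).inv (hy_pos t (Ioo_subset_Icc_self ht)).ne').const_mul M).sub
        (hG t ht)).hasDerivWithinAt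
    · rw [interior_Icc] at ht
      have hyt := hy_pos t (Ioo_subset_Icc_self ht)
      rw [sub_nonneg, ← mul_div_assoc, le_div_iff₀ (by positivity)]
      linarith [h t ht]
  have hle := hmono (left_mem_Icc.2 hab) (right_mem_Icc.2 hab) hab
  have hone : 1 ≤ M * (y a)⁻¹ := by
    rwa [← div_eq_mul_inv, one_le_div (hy_pos a (left_mem_Icc.2 hab))]
  have hkey : 1 + (G b - G a) ≤ M / y b := by
    rw [div_eq_mul_inv]
    linarith
  rwa [le_div_iff₀ hpos, mul_comm] at hkey

/-- The logarithmic profile is a primitive of `κ / (e^{-2λt} + c²)`. -/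
theorem hasDerivAt_log_profile {κ lam c : ℝ} (hlam : lam ≠ 0) (hc : c ≠ 0) (t : ℝ) :
    HasDerivAt (fun t => κ / (2 * lam * c ^ 2) *
        Real.log ((c ^ 2 * Real.exp (2 * lam * t) + 1) / (c ^ 2 + 1)))
      (κ / (Real.exp (-2 * lam * t) + c ^ 2)) t := by
  have hexp : HasDerivAt (fun t => Real.exp (2 * lam * t))
      (Real.exp (2 * lam * t) * (2 * lam * 1)) t :=
    ((hasDerivAt_id t).const_mul (2 * lam)).exp
  have hne : (c ^ 2 * Real.exp (2 * lam * t) + 1) / (c ^ 2 + 1) ≠ 0 := by positivity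
  refine (((((hexp.const_mul (c ^ 2)).add_const 1).div_const (c ^ 2 + 1)).log hne).const_mul
    (κ / (2 * lam * c ^ 2))).congr_deriv ?_
  have hneg : Real.exp (-2 * lam * t) = (Real.exp (2 * lam * t))⁻¹ := by
    rw [← Real.exp_neg]; ring_nf
  rw [hneg]
  have hE := Real.exp_pos (2 * lam * t)
  generalize Real.exp (2 * lam * t) = E at hE
  have : c ^ 2 * E + 1 ≠ 0 := by positivity
  field_simp
  ring

/-- **Quantitative decay bound from the proof of Theorem 1.2.**
Let `κ > 0`, `λ > 0`, `c > 0`, `M > 0`, and let `y : [0,1] → ℝ` be continuous,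
nonnegative, differentiable on `(0,1)`, with `y(0) ≤ M` and
`y′(t) ≤ −κ y(t)² / (M (e^{−2λt} + c²))` on `(0,1)`. Then for all `t ∈ [0,1]`,
`y(t) ≤ M / (1 + (κ/(2λc²)) log((c² e^{2λt} + 1)/(c² + 1)))`. -/
theorem enhanced_dissipation_decay (κ lam c M : ℝ) (hκ : 0 < κ) (hlam : 0 < lam)
    (hc : 0 < c) (hM : 0 < M) (y y' : ℝ → ℝ)
    (hy_cont : ContinuousOn y (Set.Icc 0 1))
    (hy_nonneg : ∀ t ∈ Set.Icc (0 : ℝ) 1, 0 ≤ y t)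
    (hy0 : y 0 ≤ M)
    (hy_deriv : ∀ t ∈ Set.Ioo (0 : ℝ) 1, HasDerivAt y (y' t) t)
    (hy_ineq : ∀ t ∈ Set.Ioo (0 : ℝ) 1,
      y' t ≤ -κ * (y t) ^ 2 / (M * (Real.exp (-2 * lam * t) + c ^ 2))) :
    ∀ t ∈ Set.Icc (0 : ℝ) 1,
      y t ≤ M / (1 + (κ / (2 * lam * c ^ 2)) *
        Real.log ((c ^ 2 * Real.exp (2 * lam * t) + 1) / (c ^ 2 + 1))) := by
  intro t ht
  have hG := hasDerivAt_log_profile (κ := κ) hlam.ne' hc.ne'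
  have hsub : Ioo 0 t ⊆ Ioo (0 : ℝ) 1 := Ioo_subset_Ioo_right ht.2
  have key := mul_one_add_sub_le_of_riccati hM ht.1
    (hy_cont.mono (Icc_subset_Icc_right ht.2))
    (fun s _ => (hG s).continuousAt.continuousWithinAt)
    (fun s hs => hy_deriv s (hsub hs)) (fun s _ => hG s) (fun s _ => by positivity)
    (hy_nonneg t ht) hy0 (fun s hs => by
      have hs' := mul_le_mul_of_nonneg_left (hy_ineq s (hsub hs)) hM.le
      refine hs'.trans_eq ?_
      have : Real.exp (-2 * lam * s) + c ^ 2 ≠ 0 := by positivity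
      field_simp)
  have hlog : 0 ≤ Real.log ((c ^ 2 * Real.exp (2 * lam * t) + 1) / (c ^ 2 + 1)) := by
    apply Real.log_nonneg
    rw [one_le_div (by positivity)]
    have : 1 ≤ Real.exp (2 * lam * t) :=
      Real.one_le_exp (mul_nonneg (by positivity) ht.1)
    nlinarith [sq_nonneg c]
  have hc1 : c ^ 2 + 1 ≠ 0 := by positivity
  rw [le_div_iff₀ (by positivity)]
  simpa [hc1] using key
end
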